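/- Let f : (0,∞) → (0,∞) be smooth and u > 0. Then for every integer N ≥ 0, as w ↓ 2 one has the expansion Δ_u(f)(w) = ∑_{j=0}^{N} c_j (w−2)^j + O((w−2)^{N+1}), where c_j = (1/(2j+1)!) · d^j/du^j ( u^{2j+1} ψ_f^{(j+1)}(u) ). In particular the k-th right derivative of Δ_u(f) at w = 2 equals (k!/(2k+1)!) · d^k/du^k ( u^{2k+1} ψ_f^{(k+1)}(u) ). -/

import Mathlib

open Set MeasureTheory Filter

noncomputable def Pk (k : ℕ) (x : ℝ) : ℝ :=
  ∑ n ∈ Finset.range (k + 1), ((2 * k).choose (n + k) : ℝ) * (-x) ^ n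

noncomputable def Pkhat (k : ℕ) (x : ℝ) : ℝ :=
  Pk k x - ((2 * k).choose k : ℝ)

/-- The kernel `Φ_k(x,t)`. -/
noncomputable def Phi (k : ℕ) (x t : ℝ) : ℝ :=
  x⁻¹ * (if t ≤ x then Pk k (t / x) else -Pkhat k (x / t))

/-- The function `ψ_k`. -/
noncomputable def psiK (k : ℕ) (y : ℝ) : ℝ :=
  if 1 ≤ y then Pk k y⁻¹ else -Pkhat k y

/-- `f` is a `k`-Stieltjes function on `(0,∞)` (for `k ≥ 2`). -/
def IsStieltjesK (k : ℕ) (f : ℝ → ℝ) : Prop :=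
  (∀ x > 0, 0 ≤ f x) ∧
  ContDiffOn ℝ (2 * k - 3 : ℕ) f (Ioi 0) ∧
  (∀ n, 1 ≤ n → n ≤ k - 1 → ∀ x > 0,
    0 ≤ (-1 : ℝ) ^ (n - 1) * iteratedDeriv (2 * n - 1) (fun y => y ^ n * f y) x) ∧
  ConvexOn ℝ (Ioi 0)
    (fun x => (-1 : ℝ) ^ (k - 1) * iteratedDeriv (2 * k - 3) (fun y => y ^ k * f y) x)

/-- `g` is `k`-monotone on the open interval `I`. -/
def KMonotoneOn (k : ℕ) (g : ℝ → ℝ) (I : Set ℝ) : Prop :=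
  if k = 1 then (∀ x ∈ I, 0 ≤ g x) ∧ AntitoneOn g I
  else
    ContDiffOn ℝ (k - 2 : ℕ) g I ∧
    ∀ n ≤ k - 2,
      (∀ x ∈ I, 0 ≤ (-1 : ℝ) ^ n * iteratedDeriv n g x) ∧
      AntitoneOn (fun x => (-1 : ℝ) ^ n * iteratedDeriv n g x) I ∧
      ConvexOn ℝ I (fun x => (-1 : ℝ) ^ n * iteratedDeriv n g x)

/-- `v(w) = (w + √(w²−4))/2`. -/
noncomputable def vOf (w : ℝ) : ℝ := (w + Real.sqrt (w ^ 2 - 4)) / 2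

/-- `F_u(w) = f(uv) f(u/v)`. -/
noncomputable def Fu (f : ℝ → ℝ) (u w : ℝ) : ℝ := f (u * vOf w) * f (u / vOf w)

/-- `f` is `k`-hyperbolically monotone. -/
def IsHMk (k : ℕ) (f : ℝ → ℝ) : Prop :=
  (∀ x > 0, 0 ≤ f x) ∧ ∀ u > 0, KMonotoneOn k (Fu f u) (Ioi 2)

/-- `f` is power regular `k`-hyperbolically monotone. -/
def IsPRHMk (k : ℕ) (f : ℝ → ℝ) : Prop :=
  ∀ p > 0, IsHMk k (fun x => f x ^ p)

/-- `ψ_f(x) = -x (log f)'(x)`. -/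
noncomputable def psiF (f : ℝ → ℝ) (x : ℝ) : ℝ := -x * deriv (fun y => Real.log (f y)) x

/-- `Δ_u(f)`. -/
noncomputable def DeltaU (f : ℝ → ℝ) (u w : ℝ) : ℝ :=
  (psiF f (u * vOf w) - psiF f (u / vOf w)) / (vOf w - (vOf w)⁻¹)

/-- `Δ_{k,u}`. -/
noncomputable def DeltaKU (k : ℕ) (u w : ℝ) : ℝ :=
  (psiK k (u * vOf w) - psiK k (u / vOf w)) / (vOf w - (vOf w)⁻¹)

/- As a function of `w`, `Δ_u(f)` is the image of `g = ψ_f` under a linear operator `D` on smooth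
functions. Hadamard's lemma gives `D g = h(uv) + h(u/v)` with `h` smooth, and since
`dv/dw = v/(v - v⁻¹)`, the derivative of the right-hand side is `D (x h')`; iterating, `D g` is
smooth up to `w = 2`, so its Taylor formula at `2` is the expansion. For the coefficients, write
`g(x) = g(u) + (x - u) g'(u) + (x - u)² q(x)`. Both `x = uv` and `x = u/v` satisfy
`(x - u)² = (w - 2) u x`, whence `D g = u g'(u) + (w - 2) D (u x q)`: passing from `g` to `u x q`
shifts the Taylor coefficients by Pascal's rule, and Leibniz' formula recognises the sum. -/

section

open scoped ContDiff Topology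

section Taylor

variable {E : Type*} [NormedAddCommGroup E] [NormedSpace ℝ E]

lemma taylorCoeffWithin_sub_smul {s : Set ℝ} (hs : UniqueDiffOn ℝ s) {c : ℝ} (hc : c ∈ s)
    {f : ℝ → E} {m : ℕ} (hf : ContDiffWithinAt ℝ (m + 1 : ℕ) f s c) :
    taylorCoeffWithin (fun x => (x - c) • f x) (m + 1) s c = taylorCoeffWithin f m s c := by
  have iteratedDerivWithin_sub_const (i : ℕ) :
      iteratedDerivWithin i (fun x => x - c) s c = if i = 1 then 1 else 0 := by
    rcases i with _ | i
    · simp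
    · simp only [sub_eq_neg_add, iteratedDerivWithin_const_add i.succ_pos,
        iteratedDerivWithin_fun_id hc hs, i.succ_ne_zero, if_false]
  have leibniz := iteratedDerivWithin_smul hc hs (f := fun x : ℝ => x - c)
    (contDiffWithinAt_id.sub contDiffWithinAt_const) hf
  rw [Finset.sum_eq_single_of_mem 1 (by simp)
    fun i _ hi => by rw [iteratedDerivWithin_sub_const, if_neg hi, zero_smul, smul_zero],
    iteratedDerivWithin_sub_const] at leibniz
  change _ • iteratedDerivWithin (m + 1) ((fun x => x - c) • f) s c = _
  rw [leibniz, taylorCoeffWithin, if_pos rfl, one_smul, Nat.choose_one_right, Nat.add_sub_cancel,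
    ← Nat.cast_smul_eq_nsmul ℝ, smul_smul, Nat.factorial_succ, Nat.cast_mul]
  congr 1
  field_simp

lemma taylorCoeffWithin_id_smul {s : Set ℝ} (hs : UniqueDiffOn ℝ s) {c : ℝ} (hc : c ∈ s)
    {f : ℝ → E} {m : ℕ} (hf : ContDiffWithinAt ℝ (m + 1 : ℕ) f s c) :
    taylorCoeffWithin (fun x => x • f x) (m + 1) s c =
      taylorCoeffWithin f m s c + c • taylorCoeffWithin f (m + 1) s c := by
  have split : (fun x => x • f x) = fun x => (x - c) • f x + c • f x := by
    ext x
    rw [sub_smul, sub_add_cancel]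
  have hshift : ContDiffWithinAt ℝ (m + 1 : ℕ) (fun x => (x - c) • f x) s c :=
    (contDiffWithinAt_id.sub contDiffWithinAt_const).smul hf
  rw [← taylorCoeffWithin_sub_smul hs hc hf, split, taylorCoeffWithin,
    iteratedDerivWithin_fun_add hc hs hshift (hf.const_smul c),
    iteratedDerivWithin_fun_const_smul_field, smul_add, smul_comm _ c]
  rfl

lemma taylorCoeffWithin_const_add (c : E) (f : ℝ → E) (m : ℕ) (s : Set ℝ) (x : ℝ) :
    taylorCoeffWithin (fun y => c + f y) (m + 1) s x = taylorCoeffWithin f (m + 1) s x := by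
  rw [taylorCoeffWithin, taylorCoeffWithin, iteratedDerivWithin_const_add m.succ_pos]

lemma taylorCoeffWithin_dslope {s : Set ℝ} (hs : UniqueDiffOn ℝ s) {c : ℝ} (hc : c ∈ s)
    {f : ℝ → E} {m : ℕ} (hf : ContDiffWithinAt ℝ (m + 1 : ℕ) (dslope f c) s c) :
    taylorCoeffWithin (dslope f c) m s c = taylorCoeffWithin f (m + 1) s c := by
  rw [← taylorCoeffWithin_sub_smul hs hc hf, ← taylorCoeffWithin_const_add (f c)]
  simp only [sub_smul_dslope, add_sub_cancel]

lemma sub_taylorWithinEval_isBigO {f : ℝ → E} {s : Set ℝ} (hs : Convex ℝ s) {c : ℝ} (hc : c ∈ s)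
    {n : ℕ} (hf : ContDiffOn ℝ (n + 1 : ℕ) f s) :
    (fun x => f x - taylorWithinEval f n s c x) =O[𝓝[s] c] fun x => (x - c) ^ (n + 1) := by
  have next_term : (fun x => (((n + 1 : ℝ) * n.factorial)⁻¹ * (x - c) ^ (n + 1)) •
      iteratedDerivWithin (n + 1) f s c) =O[𝓝[s] c] fun x => (x - c) ^ (n + 1) := by
    simpa only [smul_eq_mul, mul_one] using
      ((Asymptotics.isBigO_refl (fun x : ℝ => (x - c) ^ (n + 1)) (𝓝[s] c)).const_mul_left _).smul
        (Asymptotics.isBigO_const_const (iteratedDerivWithin (n + 1) f s c)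
          (one_ne_zero (α := ℝ)) _)
  refine ((taylor_isLittleO hs hc hf).isBigO.add next_term).congr_left fun x => ?_
  rw [taylorWithinEval_succ]
  abel

end Taylor

section Hadamard

variable {E : Type*} [NormedAddCommGroup E] [NormedSpace ℝ E] {s : Set ℝ} {a : ℝ}

lemma continuousOn_comp_segment {X : Type*} [TopologicalSpace X] {φ : ℝ → X}
    (hs : StarConvex ℝ a s) (hφ : ContinuousOn φ s) :
    ContinuousOn (fun p : ℝ × ℝ => φ (a + p.2 • (p.1 - a))) (s ×ˢ Icc 0 1) :=
  hφ.comp (by fun_prop) fun _ hp => hs.add_smul_sub_mem hp.1 hp.2.1 hp.2.2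

lemma hasDerivAt_integral_smul_comp_segment (hso : IsOpen s) (hs : StarConvex ℝ a s)
    {φ : ℝ → E} (hφ : ContDiffOn ℝ 1 φ s) {ρ : ℝ → ℝ} (hρ : Continuous ρ) {x : ℝ} (hx : x ∈ s) :
    HasDerivAt (fun x => ∫ t in (0 : ℝ)..1, ρ t • φ (a + t • (x - a)))
      (∫ t in (0 : ℝ)..1, (ρ t * t) • deriv φ (a + t • (x - a))) x := by
  have hF : ContinuousOn (fun p : ℝ × ℝ => ρ p.2 • φ (a + p.2 • (p.1 - a))) (s ×ˢ Icc 0 1) :=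
    ContinuousOn.smul (by fun_prop) (continuousOn_comp_segment hs hφ.continuousOn)
  have hF' : ContinuousOn (fun p : ℝ × ℝ => (ρ p.2 * p.2) • deriv φ (a + p.2 • (p.1 - a)))
      (s ×ˢ Icc 0 1) :=
    ContinuousOn.smul (by fun_prop)
      (continuousOn_comp_segment hs (hφ.continuousOn_deriv_of_isOpen hso le_rfl))
  have slice {G : ℝ × ℝ → E} (hG : ContinuousOn G (s ×ˢ Icc 0 1)) {y : ℝ} (hy : y ∈ s) :
      ContinuousOn (fun t => G (y, t)) (uIcc 0 1) :=
    hG.comp (by fun_prop) fun t ht => ⟨hy, by rwa [uIcc_of_le zero_le_one] at ht⟩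
  obtain ⟨ε, hε, hball⟩ := Metric.nhds_basis_closedBall.mem_iff.1 (hso.mem_nhds hx)
  obtain ⟨C, hC⟩ := ((isCompact_closedBall x ε).prod isCompact_Icc).exists_bound_of_continuousOn
    (hF'.mono (prod_mono_left hball))
  have mem_Icc {t : ℝ} (ht : t ∈ uIoc 0 1) : t ∈ Icc (0 : ℝ) 1 := by
    rw [uIoc_of_le zero_le_one] at ht
    exact Ioc_subset_Icc_self ht
  refine (intervalIntegral.hasDerivAt_integral_of_dominated_loc_of_deriv_le
    (F' := fun y t => (ρ t * t) • deriv φ (a + t • (y - a))) (bound := fun _ => C)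
    (Metric.closedBall_mem_nhds x hε) ?_ (slice hF hx).intervalIntegrable
    (((slice hF' hx).mono uIoc_subset_uIcc).aestronglyMeasurable measurableSet_uIoc)
    ?_ intervalIntegrable_const ?_).2
  · filter_upwards [hso.mem_nhds hx] with y hy
    exact ((slice hF hy).mono uIoc_subset_uIcc).aestronglyMeasurable measurableSet_uIoc
  · exact .of_forall fun t ht y hy => hC (y, t) ⟨hy, mem_Icc ht⟩
  · refine .of_forall fun t ht y hy => ?_
    have hmem := hs.add_smul_sub_mem (hball hy) (mem_Icc ht).1 (mem_Icc ht).2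
    have segment_deriv : HasDerivAt (fun y => a + t • (y - a)) t y := by
      simpa using (((hasDerivAt_id y).sub_const a).const_smul t).const_add a
    have hφ_diff := (hφ.differentiableOn one_ne_zero).differentiableAt (hso.mem_nhds hmem)
    simpa only [smul_smul] using! (hφ_diff.hasDerivAt.scomp y segment_deriv).const_smul (ρ t)

lemma contDiffOn_integral_smul_comp_segment (hso : IsOpen s) (hs : StarConvex ℝ a s)
    {φ : ℝ → E} (hφ : ContDiffOn ℝ ∞ φ s) {ρ : ℝ → ℝ} (hρ : Continuous ρ) :
    ContDiffOn ℝ ∞ (fun x => ∫ t in (0 : ℝ)..1, ρ t • φ (a + t • (x - a))) s := by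
  refine contDiffOn_infty.2 fun n => ?_
  have derivative {φ : ℝ → E} (hφ : ContDiffOn ℝ ∞ φ s) {ρ : ℝ → ℝ} (hρ : Continuous ρ) {x : ℝ}
      (hx : x ∈ s) :=
    hasDerivAt_integral_smul_comp_segment hso hs (hφ.of_le (by simp)) hρ hx
  induction n generalizing φ ρ with
  | zero =>
    exact contDiffOn_zero.2 fun x hx => (derivative hφ hρ hx).continuousAt.continuousWithinAt
  | succ n ih =>
    push_cast
    refine (contDiffOn_succ_iff_deriv_of_isOpen hso).2 ⟨fun x hx =>
      (derivative hφ hρ hx).differentiableAt.differentiableWithinAt, by simp, ?_⟩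
    exact (ih (hφ.deriv_of_isOpen hso (by simp)) (hρ.mul continuous_id)).congr
      fun x hx => (derivative hφ hρ hx).deriv

lemma dslope_eq_integral_deriv [CompleteSpace E] (hso : IsOpen s) (hs : StarConvex ℝ a s)
    {f : ℝ → E} (hf : ContDiffOn ℝ 1 f s) {x : ℝ} (hx : x ∈ s) :
    dslope f a x = ∫ t in (0 : ℝ)..1, deriv f (a + t • (x - a)) := by
  rcases eq_or_ne x a with rfl | hxa
  · simp
  have hmem {t : ℝ} (ht : t ∈ Icc (0 : ℝ) 1) : a + t • (x - a) ∈ s :=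
    hs.add_smul_sub_mem hx ht.1 ht.2
  have ftc : (x - a) • ∫ t in (0 : ℝ)..1, deriv f (a + t • (x - a)) = f (a + (x - a)) - f a :=
    intervalIntegral.integral_unitInterval_deriv_eq_sub
      ((hf.continuousOn_deriv_of_isOpen hso le_rfl).comp (by fun_prop) fun _ => hmem)
      fun t ht => ((hf.differentiableOn one_ne_zero).differentiableAt
        (hso.mem_nhds (hmem ht))).hasDerivAt
  rw [dslope_of_ne f hxa, slope, vsub_eq_sub, inv_smul_eq_iff₀ (sub_ne_zero.2 hxa), ftc,
    add_sub_cancel]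

lemma contDiffOn_dslope [CompleteSpace E] (hso : IsOpen s) (hs : StarConvex ℝ a s)
    {f : ℝ → E} (hf : ContDiffOn ℝ ∞ f s) : ContDiffOn ℝ ∞ (dslope f a) s := by
  refine (contDiffOn_integral_smul_comp_segment hso hs (hf.deriv_of_isOpen hso (by simp))
    (continuous_const (y := (1 : ℝ)))).congr fun x hx => ?_
  simpa only [one_smul] using dslope_eq_integral_deriv hso hs (hf.of_le (by simp)) hx

end Hadamard

lemma contDiffOn_iteratedDeriv {𝕜 F : Type*} [NontriviallyNormedField 𝕜] [NormedAddCommGroup F]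
    [NormedSpace 𝕜 F] {g : 𝕜 → F} {s : Set 𝕜} (hs : IsOpen s) (hg : ContDiffOn 𝕜 ∞ g s) (n : ℕ) :
    ContDiffOn 𝕜 ∞ (iteratedDeriv n g) s := by
  induction n with
  | zero => rwa [iteratedDeriv_zero]
  | succ n ih =>
    rw [iteratedDeriv_succ]
    exact ih.deriv_of_isOpen hs (by simp)

lemma inv_factorial_mul_iteratedDeriv_pow_mul {g : ℝ → ℝ} {s : Set ℝ} (hs : IsOpen s)
    (hg : ContDiffOn ℝ ∞ g s) {u : ℝ} (hu : u ∈ s) (k : ℕ) :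
    ((2 * k + 1).factorial : ℝ)⁻¹ *
        iteratedDeriv k (fun y => y ^ (2 * k + 1) * iteratedDeriv (k + 1) g y) u =
      ∑ i ∈ Finset.range (k + 1),
        k.choose i * (u ^ (k + i + 1) * taylorCoeffWithin g (k + i + 1) s u) := by
  have hderiv : ContDiffAt ℝ k (iteratedDeriv (k + 1) g) u :=
    ((contDiffOn_iteratedDeriv hs hg (k + 1)).contDiffAt (hs.mem_nhds hu)).of_le
      (by exact_mod_cast le_top)
  rw [iteratedDeriv_fun_mul (by fun_prop) hderiv, Finset.mul_sum, ← Finset.sum_flip]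
  refine Finset.sum_congr rfl fun i hi => ?_
  have hik : i ≤ k := Nat.lt_succ_iff.1 (Finset.mem_range.1 hi)
  have index : 2 * k + 1 - (k - i) = k + i + 1 := by lia
  have iterate : iteratedDeriv i (iteratedDeriv (k + 1) g) = iteratedDeriv (k + i + 1) g := by
    rw [show k + i + 1 = i + (k + 1) by ring]
    simp only [iteratedDeriv_eq_iterate, Function.iterate_add_apply]
  have factorial_eq := Nat.factorial_mul_descFactorial (show k - i ≤ 2 * k + 1 by lia)
  have descFactorial_pos : 0 < (2 * k + 1).descFactorial (k - i) :=
    Nat.pos_of_ne_zero (by rw [Ne, Nat.descFactorial_eq_zero_iff_lt]; lia)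
  rw [index] at factorial_eq
  rw [iteratedDeriv_pow, Nat.choose_symm hik, Nat.sub_sub_self hik, index, iterate, ← factorial_eq,
    taylorCoeffWithin, iteratedDerivWithin_of_isOpen hs hu, smul_eq_mul]
  push_cast
  field_simp

lemma contDiffOn_mul_deriv {h : ℝ → ℝ} {s : Set ℝ} (hs : IsOpen s) (hh : ContDiffOn ℝ ∞ h s) :
    ContDiffOn ℝ ∞ (fun x => x * deriv h x) s :=
  contDiffOn_id.mul (hh.deriv_of_isOpen hs (by simp))

section Hyperbolic

variable {u w : ℝ}

lemma vOf_two : vOf 2 = 1 := by norm_num [vOf]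

lemma continuous_vOf : Continuous vOf := by
  unfold vOf
  fun_prop

lemma vOf_pos (hw : 2 ≤ w) : 0 < vOf w := by
  unfold vOf
  positivity

lemma inv_vOf (hw : 2 ≤ w) : (vOf w)⁻¹ = (w - √(w ^ 2 - 4)) / 2 := by
  refine inv_eq_of_mul_eq_one_right ?_
  have hsq : √(w ^ 2 - 4) ^ 2 = w ^ 2 - 4 := Real.sq_sqrt (by nlinarith)
  unfold vOf
  linear_combination -hsq / 4

lemma vOf_add_inv (hw : 2 ≤ w) : vOf w + (vOf w)⁻¹ = w := by
  rw [inv_vOf hw, vOf]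
  ring

lemma vOf_sub_inv (hw : 2 ≤ w) : vOf w - (vOf w)⁻¹ = √(w ^ 2 - 4) := by
  rw [inv_vOf hw, vOf]
  ring

lemma vOf_sub_inv_pos (hw : 2 < w) : 0 < vOf w - (vOf w)⁻¹ := by
  rw [vOf_sub_inv hw.le]
  exact Real.sqrt_pos.2 (by nlinarith)

lemma hasDerivAt_vOf (hw : 2 < w) : HasDerivAt vOf (vOf w / (vOf w - (vOf w)⁻¹)) w := by
  have hroot : √(w ^ 2 - 4) ≠ 0 := vOf_sub_inv hw.le ▸ (vOf_sub_inv_pos hw).ne'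
  have hsqrt := (((hasDerivAt_id w).pow 2).sub_const 4).sqrt (Real.sqrt_ne_zero'.1 hroot).ne'
  refine (((hasDerivAt_id w).add hsqrt).div_const 2).congr_deriv ?_
  rw [vOf_sub_inv hw.le, vOf]
  simp only [id_eq, Pi.pow_apply]
  field_simp
  ring

lemma hasDerivAt_mul_vOf (hw : 2 < w) :
    HasDerivAt (fun w => u * vOf w) (u * vOf w / (vOf w - (vOf w)⁻¹)) w :=
  ((hasDerivAt_vOf hw).const_mul u).congr_deriv (mul_div_assoc _ _ _).symm

lemma hasDerivAt_div_vOf (hw : 2 < w) :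
    HasDerivAt (fun w => u / vOf w) (-(u / vOf w) / (vOf w - (vOf w)⁻¹)) w := by
  have hv := (vOf_pos hw.le).ne'
  refine (((hasDerivAt_vOf hw).inv hv).const_mul u).congr_deriv ?_
  field_simp

/-- The symmetric sum `h(uv) + h(u/v)`, as a function of `w = v + v⁻¹`. -/
noncomputable def hyperbolicSum (h : ℝ → ℝ) (u w : ℝ) : ℝ :=
  h (u * vOf w) + h (u / vOf w)

/-- The hyperbolic difference quotient `(g(uv) - g(u/v)) / (v - v⁻¹)`, as a function of
`w = v + v⁻¹`. For `w ≤ 2` it takes the value `u g'(u)`, its limit as `w ↓ 2` for smooth `g`. -/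
noncomputable def hyperbolicQuot (g : ℝ → ℝ) (u w : ℝ) : ℝ :=
  if 2 < w then (g (u * vOf w) - g (u / vOf w)) / (vOf w - (vOf w)⁻¹) else u * deriv g u

/-- The function of `x = uv` equal to `(g(x) - g(u)) / (v - v⁻¹)`, written with `dslope` so that
it extends smoothly across `v = 1`. -/
noncomputable def hyperbolicHalfQuot (g : ℝ → ℝ) (u x : ℝ) : ℝ :=
  u * x / (x + u) * dslope g u x

/-- The function `u x q(x)`, where `q(x)` is the divided difference of `g` at `u, u, x`: the
operator `hyperbolicQuot · u` turns it into `(hyperbolicQuot g u w - u g'(u)) / (w - 2)`. -/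
noncomputable def hyperbolicRem (g : ℝ → ℝ) (u x : ℝ) : ℝ :=
  u * x * dslope (dslope g u) u x

lemma hyperbolicQuot_two (g : ℝ → ℝ) (u : ℝ) : hyperbolicQuot g u 2 = u * deriv g u :=
  if_neg (lt_irrefl 2)

lemma hyperbolicQuot_of_two_lt (g : ℝ → ℝ) (u : ℝ) (hw : 2 < w) :
    hyperbolicQuot g u w = (g (u * vOf w) - g (u / vOf w)) / (vOf w - (vOf w)⁻¹) :=
  if_pos hw

lemma hyperbolicHalfQuot_eq_div (g : ℝ → ℝ) (hu : 0 < u) {v : ℝ} (hv : 0 < v) (hv1 : v ≠ 1) :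
    hyperbolicHalfQuot g u (u * v) = (g (u * v) - g u) / (v - v⁻¹) := by
  have hden : v ^ 2 - 1 ≠ 0 := by
    rw [show v ^ 2 - 1 = (v - 1) * (v + 1) by ring]
    exact mul_ne_zero (sub_ne_zero.2 hv1) (by positivity)
  rw [← sub_smul_dslope g u (u * v), hyperbolicHalfQuot, smul_eq_mul]
  field_simp
  ring

lemma eqOn_hyperbolicQuot_hyperbolicSum (g : ℝ → ℝ) (hu : 0 < u) :
    EqOn (hyperbolicQuot g u) (hyperbolicSum (hyperbolicHalfQuot g u) u) (Ici 2) := by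
  intro w hw
  rcases (mem_Ici.1 hw).eq_or_lt with rfl | hw2
  · simp only [hyperbolicQuot_two, hyperbolicSum, vOf_two, mul_one, div_one,
      hyperbolicHalfQuot, dslope_same]
    field_simp
  have hv := vOf_pos hw
  have hvinv := vOf_sub_inv_pos hw2
  have hv1 : vOf w ≠ 1 := fun h => by simp [h] at hvinv
  rw [hyperbolicQuot_of_two_lt g u hw2, hyperbolicSum, div_eq_mul_inv u,
    hyperbolicHalfQuot_eq_div g hu hv hv1,
    hyperbolicHalfQuot_eq_div g hu (inv_pos.2 hv) (inv_ne_one.2 hv1), inv_inv,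
    ← neg_sub (vOf w), div_neg]
  ring

lemma hyperbolicQuot_eq_add_sub_mul (g : ℝ → ℝ) (u : ℝ) (hw : 2 ≤ w) :
    hyperbolicQuot g u w = u * deriv g u + (w - 2) * hyperbolicQuot (hyperbolicRem g u) u w := by
  rcases hw.eq_or_lt with rfl | hw2
  · rw [hyperbolicQuot_two, sub_self, zero_mul, add_zero]
  have newton (x : ℝ) :
      g x = g u + (x - u) * deriv g u + (x - u) ^ 2 * dslope (dslope g u) u x := by
    have first_order := sub_smul_dslope g u x
    have second_order := sub_smul_dslope (dslope g u) u x
    rw [smul_eq_mul] at first_order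
    rw [smul_eq_mul, dslope_same] at second_order
    linear_combination -(x - u) * second_order - first_order
  have hsum := vOf_add_inv hw
  have hprod : vOf w * (vOf w)⁻¹ = 1 := mul_inv_cancel₀ (vOf_pos hw).ne'
  have sq_mul : (u * vOf w - u) ^ 2 = (w - 2) * (u * (u * vOf w)) := by
    linear_combination u ^ 2 * vOf w * hsum - u ^ 2 * hprod
  have sq_inv : (u * (vOf w)⁻¹ - u) ^ 2 = (w - 2) * (u * (u * (vOf w)⁻¹)) := by
    linear_combination u ^ 2 * (vOf w)⁻¹ * hsum - u ^ 2 * hprod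
  have hden := (vOf_sub_inv_pos hw2).ne'
  rw [hyperbolicQuot_of_two_lt _ u hw2, hyperbolicQuot_of_two_lt _ u hw2, newton (u * _),
    newton (u / _), hyperbolicRem, hyperbolicRem, div_eq_iff hden, add_mul, mul_assoc (w - 2),
    div_mul_cancel₀ _ hden, div_eq_mul_inv u, sq_mul, sq_inv]
  ring

lemma continuousOn_hyperbolicSum {h : ℝ → ℝ} (hu : 0 < u) (hh : ContinuousOn h (Ioi 0)) :
    ContinuousOn (hyperbolicSum h u) (Ici 2) := by
  refine (hh.comp (continuous_vOf.const_mul u).continuousOn fun w hw => ?_).add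
    (hh.comp (continuousOn_const.div continuous_vOf.continuousOn fun w hw => ?_) fun w hw => ?_)
  · exact mul_pos hu (vOf_pos hw)
  · exact (vOf_pos hw).ne'
  · exact div_pos hu (vOf_pos hw)

lemma hasDerivAt_hyperbolicSum {h : ℝ → ℝ} (hu : 0 < u) (hh : DifferentiableOn ℝ h (Ioi 0))
    (hw : 2 < w) :
    HasDerivAt (hyperbolicSum h u) (hyperbolicQuot (fun x => x * deriv h x) u w) w := by
  have hasDerivAt_h {x : ℝ} (hx : 0 < x) : HasDerivAt h (deriv h x) x :=
    (hh.differentiableAt (Ioi_mem_nhds hx)).hasDerivAt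
  refine (((hasDerivAt_h (mul_pos hu (vOf_pos hw.le))).comp w (hasDerivAt_mul_vOf hw)).add
    ((hasDerivAt_h (div_pos hu (vOf_pos hw.le))).comp w (hasDerivAt_div_vOf hw))).congr_deriv ?_
  rw [hyperbolicQuot_of_two_lt _ _ hw]
  ring

lemma contDiffOn_hyperbolicHalfQuot {g : ℝ → ℝ} (hu : 0 < u) (hg : ContDiffOn ℝ ∞ g (Ioi 0)) :
    ContDiffOn ℝ ∞ (hyperbolicHalfQuot g u) (Ioi 0) :=
  ((contDiffOn_const.mul contDiffOn_id).div (contDiffOn_id.add contDiffOn_const)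
    fun _ hx => (add_pos hx hu).ne').mul (contDiffOn_dslope isOpen_Ioi
      ((convex_Ioi 0).starConvex hu) hg)

lemma hasDerivWithinAt_hyperbolicSum {h : ℝ → ℝ} (hu : 0 < u) (hh : ContDiffOn ℝ ∞ h (Ioi 0))
    (hw : w ∈ Ici 2) : HasDerivWithinAt (hyperbolicSum h u)
      (hyperbolicSum (hyperbolicHalfQuot (fun x => x * deriv h x) u) u w) (Ici 2) w := by
  have hdiff : DifferentiableOn ℝ h (Ioi 0) := hh.differentiableOn (by simp)
  have hasDerivAt_of_two_lt {y : ℝ} (hy : 2 < y) : HasDerivAt (hyperbolicSum h u)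
      (hyperbolicSum (hyperbolicHalfQuot (fun x => x * deriv h x) u) u y) y :=
    eqOn_hyperbolicQuot_hyperbolicSum (fun x => x * deriv h x) hu hy.le ▸
      hasDerivAt_hyperbolicSum hu hdiff hy
  rcases (mem_Ici.1 hw).eq_or_lt with rfl | hw2
  · refine hasDerivWithinAt_Ici_of_tendsto_deriv
      (fun y hy => (hasDerivAt_of_two_lt hy).differentiableAt.differentiableWithinAt)
      ((continuousOn_hyperbolicSum hu hh.continuousOn 2 hw).mono Ioi_subset_Ici_self)
      self_mem_nhdsWithin ?_
    have hlim := (continuousOn_hyperbolicSum hu (contDiffOn_hyperbolicHalfQuot hu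
      (contDiffOn_mul_deriv isOpen_Ioi hh)).continuousOn 2 hw).mono Ioi_subset_Ici_self
    exact hlim.congr' (by
      filter_upwards [self_mem_nhdsWithin] with y hy using (hasDerivAt_of_two_lt hy).deriv.symm)
  · exact (hasDerivAt_of_two_lt hw2).hasDerivWithinAt

lemma contDiffOn_hyperbolicSum {h : ℝ → ℝ} (hu : 0 < u) (hh : ContDiffOn ℝ ∞ h (Ioi 0)) :
    ContDiffOn ℝ ∞ (hyperbolicSum h u) (Ici 2) := by
  refine contDiffOn_infty.2 fun n => ?_
  induction n generalizing h with
  | zero => exact contDiffOn_zero.2 (continuousOn_hyperbolicSum hu hh.continuousOn)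
  | succ n ih =>
    push_cast
    refine (contDiffOn_succ_iff_derivWithin (uniqueDiffOn_Ici 2)).2 ⟨fun w hw =>
      (hasDerivWithinAt_hyperbolicSum hu hh hw).differentiableWithinAt, by simp, ?_⟩
    exact (ih (contDiffOn_hyperbolicHalfQuot hu (contDiffOn_mul_deriv isOpen_Ioi hh))).congr
      fun w hw => (hasDerivWithinAt_hyperbolicSum hu hh hw).derivWithin (uniqueDiffOn_Ici 2 w hw)

lemma contDiffOn_hyperbolicQuot {g : ℝ → ℝ} (hu : 0 < u) (hg : ContDiffOn ℝ ∞ g (Ioi 0)) :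
    ContDiffOn ℝ ∞ (hyperbolicQuot g u) (Ici 2) :=
  (contDiffOn_hyperbolicSum hu (contDiffOn_hyperbolicHalfQuot hu hg)).congr
    (eqOn_hyperbolicQuot_hyperbolicSum g hu)

lemma contDiffOn_hyperbolicRem {g : ℝ → ℝ} (hu : 0 < u) (hg : ContDiffOn ℝ ∞ g (Ioi 0)) :
    ContDiffOn ℝ ∞ (hyperbolicRem g u) (Ioi 0) := by
  have hstar : StarConvex ℝ u (Ioi 0) := (convex_Ioi 0).starConvex hu
  exact (contDiffOn_const.mul contDiffOn_id).mul
    (contDiffOn_dslope isOpen_Ioi hstar (contDiffOn_dslope isOpen_Ioi hstar hg))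

lemma taylorCoeffWithin_hyperbolicRem {g : ℝ → ℝ} (hu : 0 < u) (hg : ContDiffOn ℝ ∞ g (Ioi 0))
    (m : ℕ) :
    taylorCoeffWithin (hyperbolicRem g u) (m + 1) (Ioi 0) u =
      u * (taylorCoeffWithin g (m + 2) (Ioi 0) u + u * taylorCoeffWithin g (m + 3) (Ioi 0) u) := by
  have hstar : StarConvex ℝ u (Ioi 0) := (convex_Ioi 0).starConvex hu
  have hslope := contDiffOn_dslope isOpen_Ioi hstar hg
  have hslope₂ := contDiffOn_dslope isOpen_Ioi hstar hslope
  have smooth_at {φ : ℝ → ℝ} (hφ : ContDiffOn ℝ ∞ φ (Ioi 0)) (n : ℕ) :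
      ContDiffWithinAt ℝ n φ (Ioi 0) u := (hφ u hu).of_le (by exact_mod_cast le_top)
  have coeff_slope₂ (n : ℕ) : taylorCoeffWithin (dslope (dslope g u) u) n (Ioi 0) u =
      taylorCoeffWithin g (n + 2) (Ioi 0) u := by
    rw [taylorCoeffWithin_dslope (uniqueDiffOn_Ioi 0) hu (smooth_at hslope₂ _),
      taylorCoeffWithin_dslope (uniqueDiffOn_Ioi 0) hu (smooth_at hslope _)]
  have hyperbolicRem_eq : hyperbolicRem g u = u • fun x => x • dslope (dslope g u) u x := by
    ext x
    simp only [hyperbolicRem, Pi.smul_apply, smul_eq_mul, mul_assoc]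
  rw [← coeff_slope₂, ← coeff_slope₂, ← smul_eq_mul u (taylorCoeffWithin _ (m + 1) _ _),
    ← taylorCoeffWithin_id_smul (uniqueDiffOn_Ioi 0) hu (smooth_at hslope₂ _), hyperbolicRem_eq,
    taylorCoeffWithin, iteratedDerivWithin_const_smul_field, smul_comm]
  rfl

lemma taylorCoeffWithin_hyperbolicQuot {g : ℝ → ℝ} (hu : 0 < u) (hg : ContDiffOn ℝ ∞ g (Ioi 0))
    (k : ℕ) :
    taylorCoeffWithin (hyperbolicQuot g u) k (Ici 2) 2 = ∑ i ∈ Finset.range (k + 1),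
      k.choose i * (u ^ (k + i + 1) * taylorCoeffWithin g (k + i + 1) (Ioi 0) u) := by
  induction k generalizing g with
  | zero =>
    simp [taylorCoeffWithin, hyperbolicQuot_two, iteratedDerivWithin_one,
      derivWithin_of_isOpen isOpen_Ioi (mem_Ioi.2 hu)]
  | succ k ih =>
    have hrem := contDiffOn_hyperbolicRem hu hg
    have recursion : taylorCoeffWithin (hyperbolicQuot g u) (k + 1) (Ici 2) 2 =
        taylorCoeffWithin (hyperbolicQuot (hyperbolicRem g u) u) k (Ici 2) 2 := by
      have hremainder : EqOn (hyperbolicQuot g u)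
          (fun w => u * deriv g u + (w - 2) * hyperbolicQuot (hyperbolicRem g u) u w) (Ici 2) :=
        fun w hw => hyperbolicQuot_eq_add_sub_mul g u hw
      rw [← taylorCoeffWithin_sub_smul (uniqueDiffOn_Ici 2) self_mem_Ici
        (((contDiffOn_hyperbolicQuot hu hrem) 2 self_mem_Ici).of_le (by exact_mod_cast le_top)),
        ← taylorCoeffWithin_const_add (u * deriv g u) (fun w => (w - 2) • _), taylorCoeffWithin,
        iteratedDerivWithin_congr hremainder self_mem_Ici]
      rfl
    rw [recursion, ih hrem, Finset.sum_choose_succ_mul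
      (fun i _ => u ^ (k + 1 + i + 1) * taylorCoeffWithin g (k + 1 + i + 1) (Ioi 0) u),
      ← Finset.sum_add_distrib]
    refine Finset.sum_congr rfl fun i _ => ?_
    rw [taylorCoeffWithin_hyperbolicRem hu hg, show k + 1 + i + 1 = k + i + 2 by ring,
      show k + 1 + (i + 1) + 1 = k + i + 3 by ring]
    ring

lemma taylorCoeffWithin_hyperbolicQuot_eq_iteratedDeriv {g : ℝ → ℝ} (hu : 0 < u)
    (hg : ContDiffOn ℝ ∞ g (Ioi 0)) (k : ℕ) :
    taylorCoeffWithin (hyperbolicQuot g u) k (Ici 2) 2 = ((2 * k + 1).factorial : ℝ)⁻¹ *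
      iteratedDeriv k (fun y => y ^ (2 * k + 1) * iteratedDeriv (k + 1) g y) u :=
  (taylorCoeffWithin_hyperbolicQuot hu hg k).trans
    (inv_factorial_mul_iteratedDeriv_pow_mul isOpen_Ioi hg hu k).symm

end Hyperbolic

lemma contDiffOn_psiF {f : ℝ → ℝ} (hf : ContDiffOn ℝ ∞ f (Ioi 0)) (hf0 : ∀ x > 0, f x ≠ 0) :
    ContDiffOn ℝ ∞ (psiF f) (Ioi 0) :=
  contDiffOn_id.neg.mul ((hf.log hf0).deriv_of_isOpen isOpen_Ioi (by simp))

end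

/-- Lemma 4: for smooth positive `f` and `u > 0`, `Δ_u(f)` admits the
expansion `Δ_u(f)(w) = ∑_{j=0}^N c_j (w-2)^j + O((w-2)^{N+1})` as `w ↓ 2`, with
`c_j = (1/(2j+1)!) (u^{2j+1} ψ_f^{(j+1)}(u))^{(j)}`; in particular the `k`-th right
derivative of (the continuous extension of) `Δ_u(f)` at `w = 2` equals
`(k!/(2k+1)!) (u^{2k+1} ψ_f^{(k+1)}(u))^{(k)}`. -/
theorem deltaU_taylor_expansion_at_two (f : ℝ → ℝ) (hpos : ∀ x > 0, 0 < f x)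
    (hsmooth : ContDiffOn ℝ (⊤ : ℕ∞) f (Ioi 0)) (u : ℝ) (hu : 0 < u) :
    (∀ N : ℕ,
      (fun w => DeltaU f u w -
        ∑ j ∈ Finset.range (N + 1),
          ((2 * j + 1).factorial : ℝ)⁻¹ *
            iteratedDeriv j
              (fun y => y ^ (2 * j + 1) * iteratedDeriv (j + 1) (psiF f) y) u *
          (w - 2) ^ j)
        =O[nhdsWithin 2 (Ioi 2)] fun w => (w - 2) ^ (N + 1)) ∧
    (∀ k : ℕ,
      iteratedDerivWithin k
        (fun w => if 2 < w then DeltaU f u w else u * deriv (psiF f) u) (Ici 2) 2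
        = ((k.factorial : ℝ) / ((2 * k + 1).factorial : ℝ)) *
            iteratedDeriv k
              (fun y => y ^ (2 * k + 1) * iteratedDeriv (k + 1) (psiF f) y) u) := by
  have hψ := contDiffOn_psiF hsmooth fun x hx => (hpos x hx).ne'
  have coeff := taylorCoeffWithin_hyperbolicQuot_eq_iteratedDeriv hu hψ
  refine ⟨fun N => ?_, fun k => ?_⟩
  · have remainder := (sub_taylorWithinEval_isBigO (n := N) (convex_Ici 2) self_mem_Ici
      ((contDiffOn_hyperbolicQuot hu hψ).of_le (by exact_mod_cast le_top))).mono
      (nhdsWithin_mono 2 Ioi_subset_Ici_self)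
    refine remainder.congr' ?_ .rfl
    filter_upwards [self_mem_nhdsWithin] with w hw
    rw [hyperbolicQuot_of_two_lt _ u hw, taylor_within_apply, DeltaU]
    congr 1
    refine Finset.sum_congr rfl fun j _ => ?_
    rw [← coeff, taylorCoeffWithin, smul_eq_mul, smul_eq_mul]
    ring
  · rw [div_mul_eq_mul_div, mul_div_assoc, div_eq_inv_mul, ← coeff, taylorCoeffWithin, smul_eq_mul,
      mul_inv_cancel_left₀ (by positivity)]
    rfl
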